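/- For every L ≥ 0, the numbers m_L satisfy the reflection relation m_L = Σ_{s=0}^{L} C(L,s) · (−1)^s · m_s, where C(L,s) is the binomial coefficient; equivalently ∫ (x/(x+1))^L dμ(x) = ∫ (x+1)^(−L) dμ(x). In particular m_0 = 1 and m_1 = 1/2. -/

import Mathlib

open Filter

/-- The generations of the Calkin–Wilf tree: `CW 0 = [1/1]` is the first
generation, and each generation is obtained from the previous one by replacing
each entry `x` by `x/(x+1)` and `x+1`, in this order.  Thus the `n`-th
generation of the paper is `CW (n-1)`. -/
def CW : ℕ → List ℚ
  | 0 => [1]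
  | n + 1 => (CW n).flatMap (fun x => [x / (x + 1), x + 1])

open scoped Classical in
/-- `Fcw n` is the distribution function of the `(n+1)`-st generation of the
Calkin–Wilf tree: `Fcw (n-1) x = F_n(x) = 2^(1-n) · #{j : x_j^(n) ≤ x}`. -/
noncomputable def Fcw (n : ℕ) (x : ℝ) : ℝ :=
  ((CW n).countP (fun q => decide ((q : ℝ) ≤ x))) / 2 ^ n

open MeasureTheory

/-!
The children of `q⁻¹` are the inverses of the children of `q` in the opposite order, so inversion
reverses every generation of the tree. Since no entry is repeated within a generation,
`F_n(x) + F_n(1/x)` exceeds `1` by at most the weight of a single entry, and in the limit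
`F(x) + F(1/x) = 1` for `x > 0`. Right continuity of `x ↦ μ (-∞, x]` then shows that `μ` is carried
by `(0, ∞)` and invariant under `x ↦ 1/x`. Under this inversion `t = x/(x+1)` becomes
`1 - t = 1/(x+1)`, and expanding `(1 - t)^L` gives the relation between the moments.
-/

section List

lemma countP_le_add_countP_ge {α : Type*} [LinearOrder α] (l : List α) (x : α) :
    l.countP (· ≤ x) + l.countP (x ≤ ·) = l.length + l.count x := by
  induction l with
  | nil => simp
  | cons a l ih =>
    simp only [List.countP_cons, List.length_cons, List.count_cons, decide_eq_true_eq, beq_iff_eq]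
    rcases lt_trichotomy a x with h | rfl | h
    · simp only [h.le, h.not_ge, h.ne, if_true, if_false]; omega
    · simp only [le_refl, if_true]; omega
    · simp only [h.le, h.not_ge, h.ne', if_true, if_false]; omega

lemma countP_le_inv_of_map_inv_perm {K : Type*} [Field K] [LinearOrder K] [IsStrictOrderedRing K]
    {l : List K} (hpos : ∀ a ∈ l, 0 < a) (hinv : (l.map (·⁻¹)).Perm l) {x : K} (hx : 0 < x) :
    l.countP (· ≤ x⁻¹) = l.countP (x ≤ ·) := by
  rw [← hinv.countP_eq, List.countP_map]
  refine List.countP_congr fun a ha ↦ ?_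
  simpa using inv_le_inv₀ (hpos a ha) hx

end List

section InvInvariance

lemma tendsto_measure_Iic_nhdsGT {α : Type*} [LinearOrder α] [TopologicalSpace α]
    [OrderTopology α] [DenselyOrdered α] [NoMaxOrder α] [FirstCountableTopology α]
    [MeasurableSpace α] [OpensMeasurableSpace α] (μ : Measure α) [IsFiniteMeasure μ] (x : α) :
    Tendsto (fun y ↦ μ (Set.Iic y)) (nhdsWithin x (Set.Ioi x)) (nhds (μ (Set.Iic x))) := by
  have Iic_eq_biInter : Set.Iic x = ⋂ y > x, Set.Iic y := by
    ext z
    simpa using forall_gt_imp_ge_iff_le_of_dense.symm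
  rw [Iic_eq_biInter]
  exact tendsto_measure_biInter_gt (fun _ _ ↦ measurableSet_Iic.nullMeasurableSet)
    (fun _ _ _ h ↦ Set.Iic_subset_Iic.2 h) ((exists_gt x).imp fun y hy ↦ ⟨hy, measure_ne_top μ _⟩)

lemma measure_eq_of_Iio_eq_Iic {α : Type*} [LinearOrder α] [TopologicalSpace α]
    [OrderTopology α] [DenselyOrdered α] [NoMaxOrder α] [SecondCountableTopology α]
    [MeasurableSpace α] [BorelSpace α] {μ ν : Measure α} [IsFiniteMeasure μ]
    (h : ∀ x, ν (Set.Iio x) = μ (Set.Iic x)) : ν = μ := by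
  refine (Measure.ext_of_Iic μ ν fun x ↦ le_antisymm ?_ ?_).symm
  · exact (h x).symm.trans_le (measure_mono Set.Iio_subset_Iic_self)
  · refine ge_of_tendsto (tendsto_measure_Iic_nhdsGT μ x) ?_
    filter_upwards [self_mem_nhdsWithin] with y hxy
    exact (measure_mono (Set.Iic_subset_Iio.2 hxy)).trans_eq (h y)

variable {μ : Measure ℝ} [IsProbabilityMeasure μ]
  (hsymm : ∀ x > 0, μ.real (Set.Ioc 0 x) + μ.real (Set.Ioc 0 x⁻¹) = 1)
include hsymm

-- The mass missing from `(0, y⁻¹]` is exactly that of `(0, y]`, which tends to `0` with `y`.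
lemma ae_pos_of_Ioc_add_Ioc_inv : ∀ᵐ x ∂μ, 0 < x := by
  have hbound : ∀ y > 0, 2 * μ.real (Set.Iic 0) ≤ μ.real (Set.Iic y) := by
    intro y hy
    have split {b : ℝ} (hb : 0 ≤ b) :
        μ.real (Set.Iic b) = μ.real (Set.Iic 0) + μ.real (Set.Ioc 0 b) := by
      rw [← Set.Iic_union_Ioc_eq_Iic hb,
        measureReal_union (Set.Iic_disjoint_Ioc le_rfl) measurableSet_Ioc]
    have hle : μ.real (Set.Iic y⁻¹) ≤ 1 := measureReal_le_one
    linarith [split hy.le, split (inv_nonneg.2 hy.le), hsymm y hy]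
  have hlim : Tendsto (fun y ↦ μ.real (Set.Iic y)) (nhdsWithin 0 (Set.Ioi 0))
      (nhds (μ.real (Set.Iic 0))) :=
    (ENNReal.tendsto_toReal (measure_ne_top μ _)).comp (tendsto_measure_Iic_nhdsGT μ 0)
  have hzero : μ.real (Set.Iic 0) = 0 := by
    have := ge_of_tendsto hlim (eventually_mem_nhdsWithin.mono hbound)
    linarith [measureReal_nonneg (μ := μ) (s := Set.Iic 0)]
  simpa [ae_iff, Set.Iic_def] using (measureReal_eq_zero_iff).1 hzero

open scoped Pointwise in
lemma isInvInvariant_of_Ioc_add_Ioc_inv : μ.IsInvInvariant := by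
  have hpos : ∀ᵐ y ∂μ, 0 < y := ae_pos_of_Ioc_add_Ioc_inv hsymm
  refine ⟨measure_eq_of_Iio_eq_Iic fun x ↦ ?_⟩
  rw [Measure.inv_apply]
  rcases le_or_gt x 0 with hx | hx
  · refine measure_congr (eventuallyEq_set.2 ?_)
    filter_upwards [hpos] with y hy
    simp [(hx.trans_lt hy).not_ge, (hx.trans_lt (inv_pos.2 hy)).not_gt]
  have Iio_inv_ae : ((Set.Iio x)⁻¹ : Set ℝ) =ᵐ[μ] Set.Ioi x⁻¹ := by
    refine eventuallyEq_set.2 ?_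
    filter_upwards [hpos] with y hy
    simpa using inv_lt_comm₀ hy hx
  have Iic_ae (b : ℝ) : Set.Iic b =ᵐ[μ] Set.Ioc 0 b := by
    refine eventuallyEq_set.2 ?_
    filter_upwards [hpos] with y hy
    simp [hy]
  rw [measure_congr Iio_inv_ae, ← measureReal_eq_measureReal_iff]
  calc μ.real (Set.Ioi x⁻¹)
      = 1 - μ.real (Set.Ioc 0 x⁻¹) := by
        rw [← Set.compl_Iic, probReal_compl_eq_one_sub measurableSet_Iic,
          measureReal_congr (Iic_ae _)]
    _ = μ.real (Set.Ioc 0 x) := by linarith [hsymm x hx]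
    _ = μ.real (Set.Iic x) := (measureReal_congr (Iic_ae x)).symm

end InvInvariance

section Moments

lemma integral_one_sub_pow {α 𝕜 : Type*} [MeasurableSpace α] [RCLike 𝕜] {μ : Measure α}
    {g : α → 𝕜} {L : ℕ} (hg : ∀ s ≤ L, Integrable (fun x ↦ g x ^ s) μ) :
    ∫ x, (1 - g x) ^ L ∂μ =
      ∑ s ∈ Finset.range (L + 1), (L.choose s : 𝕜) * (-1) ^ s * ∫ x, g x ^ s ∂μ := by
  have expand (x : α) : (1 - g x) ^ L =
      ∑ s ∈ Finset.range (L + 1), (L.choose s : 𝕜) * (-1) ^ s * g x ^ s := by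
    rw [sub_eq_neg_add, add_pow]
    refine Finset.sum_congr rfl fun s _ ↦ ?_
    rw [neg_pow, one_pow]
    ring
  simp_rw [expand, ← integral_const_mul]
  exact integral_finsetSum _ fun s hs ↦
    (hg s (Nat.lt_succ_iff.1 (Finset.mem_range.1 hs))).const_mul _

variable {μ : Measure ℝ} (hpos : ∀ᵐ x ∂μ, 0 < x)
include hpos

lemma integrable_div_add_one_pow [IsFiniteMeasure μ] (s : ℕ) :
    Integrable (fun x ↦ (x / (x + 1)) ^ s) μ := by
  refine Integrable.of_bound (C := 1)
    (Measurable.pow_const (by fun_prop) s).aestronglyMeasurable ?_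
  filter_upwards [hpos] with x hx
  rw [Real.norm_of_nonneg (by positivity)]
  exact pow_le_one₀ (by positivity) ((div_le_one (by positivity)).2 (by linarith))

lemma integral_div_add_one_pow_eq_integral_zpow_neg [μ.IsInvInvariant] (L : ℕ) :
    ∫ x, (x / (x + 1)) ^ L ∂μ = ∫ x, (x + 1) ^ (-(L : ℤ)) ∂μ := by
  rw [← (Measure.measurePreserving_inv μ).integral_comp (MeasurableEquiv.inv ℝ).measurableEmbedding]
  refine integral_congr_ae ?_
  filter_upwards [hpos] with x hx
  have : x⁻¹ / (x⁻¹ + 1) = (x + 1)⁻¹ := by field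
  rw [this, zpow_neg, zpow_natCast, inv_pow]

lemma integral_add_one_zpow_neg_eq_sum [IsFiniteMeasure μ] (L : ℕ) :
    ∫ x, (x + 1) ^ (-(L : ℤ)) ∂μ = ∑ s ∈ Finset.range (L + 1),
      (L.choose s : ℝ) * (-1) ^ s * ∫ x, (x / (x + 1)) ^ s ∂μ := by
  rw [← integral_one_sub_pow fun s _ ↦ integrable_div_add_one_pow hpos s]
  refine integral_congr_ae ?_
  filter_upwards [hpos] with x hx
  have : 1 - x / (x + 1) = (x + 1)⁻¹ := by field
  rw [this, zpow_neg, zpow_natCast, inv_pow]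

end Moments

section CalkinWilf

lemma pos_of_mem_CW {n : ℕ} {q : ℚ} (hq : q ∈ CW n) : 0 < q := by
  induction n generalizing q with
  | zero => simp_all [CW]
  | succ n ih =>
    simp only [CW, List.mem_flatMap, List.mem_cons, List.not_mem_nil, or_false] at hq
    obtain ⟨x, hx, rfl | rfl⟩ := hq <;> have := ih hx <;> positivity

lemma length_CW (n : ℕ) : (CW n).length = 2 ^ n := by
  induction n with
  | zero => simp [CW]
  | succ n ih => simp [CW, List.length_flatMap, ih, pow_succ]

lemma map_inv_CW (n : ℕ) : (CW n).map (·⁻¹) = (CW n).reverse := by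
  induction n with
  | zero => simp [CW]
  | succ n ih =>
    have children_inv (x : ℚ) (hx : x ∈ CW n) : [x / (x + 1), x + 1].map (·⁻¹) =
        [x⁻¹ / (x⁻¹ + 1), x⁻¹ + 1].reverse := by
      have := pos_of_mem_CW hx
      simp only [List.map_cons, List.map_nil, List.reverse_cons, List.reverse_nil, List.nil_append,
        List.singleton_append, List.cons.injEq, and_true]
      constructor <;> field
    calc (CW (n + 1)).map (·⁻¹)
        = (CW n).flatMap fun x ↦ [x⁻¹ / (x⁻¹ + 1), x⁻¹ + 1].reverse := by
          rw [CW, List.map_flatMap]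
          exact List.flatMap_congr children_inv
      _ = ((CW n).map (·⁻¹)).flatMap fun x ↦ [x / (x + 1), x + 1].reverse := by
          rw [List.flatMap_map]
      _ = (CW (n + 1)).reverse := by
          rw [ih, CW, List.reverse_flatMap]
          rfl

lemma nodup_CW (n : ℕ) : (CW n).Nodup := by
  induction n with
  | zero => simp [CW]
  | succ n ih =>
    have left_lt_right {x y : ℚ} (hx : x ∈ CW n) (hy : y ∈ CW n) : x / (x + 1) < y + 1 := by
      have hx := pos_of_mem_CW hx
      have hy := pos_of_mem_CW hy
      calc x / (x + 1) < 1 := by rw [div_lt_one (by positivity)]; linarith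
        _ < y + 1 := by linarith
    have left_injective {x y : ℚ} (hx : x ∈ CW n) (hy : y ∈ CW n)
        (h : x / (x + 1) = y / (y + 1)) : x = y := by
      have hx := pos_of_mem_CW hx
      have hy := pos_of_mem_CW hy
      field_simp at h
      linarith
    rw [CW, List.nodup_flatMap]
    refine ⟨fun x hx ↦ by simpa using (left_lt_right hx hx).ne,
      ih.imp_of_mem fun {x y} hx hy hxy ↦ ?_⟩
    have hleft : y / (y + 1) ≠ x / (x + 1) := fun h ↦ hxy (left_injective hy hx h).symm
    simpa [Function.onFun, hleft, hxy.symm] using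
      ⟨(left_lt_right hy hx).ne, (left_lt_right hx hy).ne'⟩

lemma Fcw_eq_countP_map (n : ℕ) (x : ℝ) :
    Fcw n x = ((CW n).map ((↑) : ℚ → ℝ)).countP (· ≤ x) / 2 ^ n := by
  have coe_eq_map : (do let q ← CW n; pure (q : ℝ)) = (CW n).map ((↑) : ℚ → ℝ) :=
    List.map_eq_flatMap.symm
  rw [Fcw, coe_eq_map]

lemma Fcw_zero (n : ℕ) : Fcw n 0 = 0 := by
  have h : ((CW n).map ((↑) : ℚ → ℝ)).countP (· ≤ 0) = 0 := by
    simpa [List.countP_eq_zero] using fun q ↦ pos_of_mem_CW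
  simp [Fcw_eq_countP_map, h]

lemma Fcw_add_Fcw_inv (n : ℕ) {x : ℝ} (hx : 0 < x) :
    Fcw n x + Fcw n x⁻¹ = 1 + ((CW n).map ((↑) : ℚ → ℝ)).count x / 2 ^ n := by
  set l := (CW n).map ((↑) : ℚ → ℝ) with hl
  have hpos : ∀ a ∈ l, 0 < a := by
    simpa [hl] using fun q ↦ pos_of_mem_CW
  have hinv : (l.map (·⁻¹)).Perm l := by
    have : l.map (·⁻¹) = ((CW n).map (·⁻¹)).map (↑) := by simp [hl]
    rw [this, map_inv_CW]
    exact (List.reverse_perm _).map _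
  have hcount : (l.countP (· ≤ x) + l.countP (x ≤ ·) : ℝ) = 2 ^ n + l.count x := by
    have hlen : l.length = 2 ^ n := by rw [hl, List.length_map, length_CW]
    exact_mod_cast hlen ▸ countP_le_add_countP_ge l x
  rw [Fcw_eq_countP_map, Fcw_eq_countP_map, ← hl, countP_le_inv_of_map_inv_perm hpos hinv hx,
    ← add_div, hcount, add_div, div_self (by positivity)]

lemma tendsto_Fcw_add_Fcw_inv {x : ℝ} (hx : 0 < x) :
    Tendsto (fun n ↦ Fcw n x + Fcw n x⁻¹) atTop (nhds 1) := by
  have count_le_one (n : ℕ) : (((CW n).map ((↑) : ℚ → ℝ)).count x : ℝ) ≤ 1 := by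
    exact_mod_cast List.nodup_iff_count_le_one.1 ((nodup_CW n).map Rat.cast_injective) x
  have hzero : Tendsto (fun n ↦ (((CW n).map ((↑) : ℚ → ℝ)).count x : ℝ) / 2 ^ n) atTop
      (nhds 0) := by
    refine squeeze_zero (fun n ↦ by positivity) (fun n ↦ ?_)
      (tendsto_pow_atTop_nhds_zero_of_lt_one (r := (1 / 2 : ℝ)) (by norm_num) (by norm_num))
    rw [one_div_pow]
    gcongr
    exact count_le_one n
  simpa [Fcw_add_Fcw_inv _ hx] using hzero.const_add 1

variable {F : ℝ → ℝ} (hF : ∀ x : ℝ, 0 ≤ x → Tendsto (fun n ↦ Fcw n x) atTop (nhds (F x)))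
include hF

lemma limit_Fcw_zero : F 0 = 0 :=
  tendsto_nhds_unique (hF 0 le_rfl) (by simp [Fcw_zero])

lemma limit_Fcw_nonneg {x : ℝ} (hx : 0 ≤ x) : 0 ≤ F x :=
  ge_of_tendsto' (hF x hx) fun n ↦ by rw [Fcw_eq_countP_map]; positivity

lemma limit_Fcw_add_limit_Fcw_inv {x : ℝ} (hx : 0 < x) : F x + F x⁻¹ = 1 :=
  tendsto_nhds_unique ((hF x hx.le).add (hF x⁻¹ (inv_nonneg.2 hx.le)))
    (tendsto_Fcw_add_Fcw_inv hx)

lemma measureReal_Ioc_zero_add_Ioc_zero_inv {μ : Measure ℝ}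
    (hμ : ∀ b : ℝ, 0 ≤ b → μ (Set.Ioc 0 b) = ENNReal.ofReal (F b - F 0)) {x : ℝ} (hx : 0 < x) :
    μ.real (Set.Ioc 0 x) + μ.real (Set.Ioc 0 x⁻¹) = 1 := by
  have hIoc {b : ℝ} (hb : 0 ≤ b) : μ.real (Set.Ioc 0 b) = F b := by
    rw [measureReal_def, hμ b hb, limit_Fcw_zero hF, sub_zero,
      ENNReal.toReal_ofReal (limit_Fcw_nonneg hF hb)]
  rw [hIoc hx.le, hIoc (inv_nonneg.2 hx.le), limit_Fcw_add_limit_Fcw_inv hF hx]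

end CalkinWilf

/-- Let `F` be the limit distribution function of the Calkin–Wilf tree and `μ`
its Lebesgue–Stieltjes (probability) measure, so that `μ(a,b] = F(b) − F(a)`.
With `m_k = ∫ (x/(x+1))^k dμ`, the reflection symmetry of `F` gives
`m_L = ∑_{s=0}^{L} C(L,s)·(−1)^s·m_s` for every `L ≥ 0`, equivalently
`∫ (x/(x+1))^L dμ = ∫ (x+1)^(−L) dμ`; in particular `m₀ = 1` and `m₁ = 1/2`. -/
theorem calkin_wilf_m_reflection (F : ℝ → ℝ)
    (hF : ∀ x : ℝ, 0 ≤ x → Tendsto (fun n => Fcw n x) atTop (nhds (F x)))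
    (μ : Measure ℝ) (hprob : IsProbabilityMeasure μ)
    (hμ : ∀ a b : ℝ, a ≤ b → μ (Set.Ioc a b) = ENNReal.ofReal (F b - F a)) :
    (∀ L : ℕ, ∫ x, (x / (x + 1)) ^ L ∂μ =
      ∑ s ∈ Finset.range (L + 1),
        (L.choose s : ℝ) * (-1 : ℝ) ^ s * ∫ x, (x / (x + 1)) ^ s ∂μ) ∧
    (∀ L : ℕ, ∫ x, (x / (x + 1)) ^ L ∂μ = ∫ x, (x + 1) ^ (-(L : ℤ)) ∂μ) ∧
    (∫ x, (x / (x + 1)) ^ (0 : ℕ) ∂μ) = 1 ∧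
    (∫ x, (x / (x + 1)) ^ (1 : ℕ) ∂μ) = 1 / 2 := by
  have hsymm : ∀ x > 0, μ.real (Set.Ioc 0 x) + μ.real (Set.Ioc 0 x⁻¹) = 1 := fun x hx ↦
    measureReal_Ioc_zero_add_Ioc_zero_inv hF (hμ 0) hx
  have hpos : ∀ᵐ x ∂μ, 0 < x := ae_pos_of_Ioc_add_Ioc_inv hsymm
  have : μ.IsInvInvariant := isInvInvariant_of_Ioc_add_Ioc_inv hsymm
  have reflection := integral_div_add_one_pow_eq_integral_zpow_neg hpos
  have expansion (L : ℕ) := (reflection L).trans (integral_add_one_zpow_neg_eq_sum hpos L)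
  have moment_zero : ∫ x, (x / (x + 1)) ^ 0 ∂μ = 1 := by simp
  have moment_one : ∫ x, (x / (x + 1)) ^ 1 ∂μ = 1 - ∫ x, (x / (x + 1)) ^ 1 ∂μ := by
    simpa [Finset.sum_range_succ, ← sub_eq_add_neg] using expansion 1
  exact ⟨expansion, reflection, moment_zero, by linarith⟩
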